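/- arXiv:2507.14982 — 2 statements merged into one kernel-verified Lean document; each statement's English description precedes it below -/
import Mathlib

section
/- Let N_T ≥ 1 and d ≥ 1 be natural numbers, let P > 0, and let Q_1,…,Q_d ∈ ℂ^{N_T×N_T} be linearly independent Hermitian matrices. For any V̂ ∈ ℂ^{N_T×N_T} with Tr(V̂ V̂^H) ≤ P, there exist a natural number N ≤ ⌊√d⌋ and a matrix V' ∈ ℂ^{N_T×N} such that Tr(Q_i V' V'^H) = Tr(Q_i V̂ V̂^H) for all i = 1,…,d and Tr(V' V'^H) ≤ P. In other words, in a MIMO radar system whose sensing performance is a d-quadratic metric, at most ⌊√d⌋ beamformers achieve the same performance as a full set of N_T beamformers. -/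
open Matrix Finset

noncomputable section

/-!
Only the transmit covariance `S = V Vᴴ` matters, and `V` may be given `rank S` columns. Suppose
`S = V Vᴴ` has rank `r` and `r² > d`. The Hermitian `r × r` matrices form a real space of dimension
`r²`, so some Hermitian `X ≠ 0` satisfies `Tr(Qᵢ V X Vᴴ) = 0` for all `i`. Up to replacing `X` by
`-X`, it has a positive eigenvalue and `Tr(V X Vᴴ) ≥ 0`. With `1 / t` its largest eigenvalue,
`1 - t X` is positive semidefinite and singular, so `V (1 - t X) Vᴴ` has smaller rank than `S`, the
same `d` traces and no larger power. Iterate until `r² ≤ d` (a Barvinok–Pataki rank reduction).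
-/

open scoped MatrixOrder ComplexOrder

section StarModule

theorem finrank_real_selfAdjoint (A : Type*) [AddCommGroup A] [Module ℂ A] [StarAddMonoid A]
    [StarModule ℂ A] [FiniteDimensional ℂ A] :
    Module.finrank ℝ (selfAdjoint A) = Module.finrank ℂ A := by
  have : FiniteDimensional ℝ A := FiniteDimensional.complexToReal A
  have : FiniteDimensional ℝ (selfAdjoint A) :=
    inferInstanceAs (FiniteDimensional ℝ (selfAdjoint.submodule ℝ A))
  have : FiniteDimensional ℝ (skewAdjoint A) :=
    inferInstanceAs (FiniteDimensional ℝ (skewAdjoint.submodule ℝ A))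
  have negISMul_bijective : Function.Bijective (skewAdjoint.negISMul (A := A)) := by
    refine ⟨fun a b hab => ?_, fun a => ?_⟩
    · rw [Subtype.ext_iff, ← skewAdjoint.I_smul_neg_I a, hab, skewAdjoint.I_smul_neg_I]
    · exact ⟨⟨Complex.I • (a : A), by simp⟩, by ext; simp [smul_smul]⟩
  have skew_eq := (LinearEquiv.ofBijective _ negISMul_bijective).finrank_eq
  have decompose := (StarModule.decomposeProdAdjoint ℝ A).finrank_eq
  rw [Module.finrank_prod, skew_eq, finrank_real_of_complex] at decompose
  lia

theorem exists_isSelfAdjoint_ne_zero_map_eq_zero {A E : Type*} [AddCommGroup A] [Module ℝ A]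
    [StarAddMonoid A] [StarModule ℝ A] [FiniteDimensional ℝ A] [AddCommGroup E] [Module ℝ E]
    [FiniteDimensional ℝ E] (L : A →ₗ[ℝ] E)
    (hL : Module.finrank ℝ E < Module.finrank ℝ (selfAdjoint A)) :
    ∃ x, IsSelfAdjoint x ∧ x ≠ 0 ∧ L x = 0 := by
  have hker : LinearMap.ker (L ∘ₗ (selfAdjoint.submodule ℝ A).subtype) ≠ ⊥ :=
    LinearMap.ker_ne_bot_of_finrank_lt hL
  obtain ⟨x, hLx, hx⟩ := (Submodule.ne_bot_iff _).mp hker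
  exact ⟨x, x.2, Subtype.coe_ne_coe.mpr hx, hLx⟩

end StarModule

section Order

theorem not_nonpos_and_map_nonneg_or_neg {R E F : Type*} [Ring R] [AddCommGroup E]
    [PartialOrder E] [IsOrderedAddMonoid E] [Module R E] [AddCommGroup F] [LinearOrder F]
    [IsOrderedAddMonoid F] [Module R F] (f : E →ₚ[R] F) {x : E} (hx : x ≠ 0) :
    (¬x ≤ 0 ∧ 0 ≤ f x) ∨ (¬-x ≤ 0 ∧ 0 ≤ f (-x)) := by
  by_cases hpos : 0 ≤ x
  · exact .inl ⟨fun hneg => hx (le_antisymm hneg hpos), f.map_nonneg hpos⟩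
  by_cases hneg : x ≤ 0
  · exact .inr ⟨by rwa [neg_nonpos], f.map_nonneg (neg_nonneg.mpr hneg)⟩
  rcases le_total 0 (f x) with hf | hf
  · exact .inl ⟨hneg, hf⟩
  · exact .inr ⟨by rwa [neg_nonpos], by rwa [map_neg, neg_nonneg]⟩

theorem exists_pos_smul_le_one_not_isUnit {A : Type*} [TopologicalSpace A] [Ring A] [StarRing A]
    [Algebra ℝ A] [StarModule ℝ A] [PartialOrder A] [StarOrderedRing A]
    [ContinuousFunctionalCalculus ℝ A IsSelfAdjoint] [NonnegSpectrumClass ℝ A] {a : A}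
    (ha : IsSelfAdjoint a) (hpos : ¬a ≤ 0) :
    ∃ t : ℝ, 0 < t ∧ t • a ≤ 1 ∧ ¬IsUnit (1 - t • a) := by
  have exists_pos : ∃ x ∈ spectrum ℝ a, 0 < x := by
    rw [← map_zero (algebraMap ℝ A), le_algebraMap_iff_spectrum_le] at hpos
    push Not at hpos
    exact hpos
  obtain ⟨x, hx, hx0⟩ := exists_pos
  obtain ⟨c, hc, hmax⟩ := (ContinuousFunctionalCalculus.isCompact_spectrum (R := ℝ)
    a).exists_isMaxOn ⟨x, hx⟩ continuousOn_id
  have hc0 : 0 < c := hx0.trans_le (hmax hx)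
  have hle : a ≤ algebraMap ℝ A c := le_algebraMap_of_spectrum_le fun y hy => hmax hy
  have hscale : algebraMap ℝ A c - a = c • (1 - c⁻¹ • a) := by
    rw [smul_sub, smul_inv_smul₀ hc0.ne', Algebra.algebraMap_eq_smul_one]
  refine ⟨c⁻¹, inv_pos.mpr hc0, ?_, fun hunit => hc ?_⟩
  · rw [← sub_nonneg, hscale] at hle
    rw [← sub_nonneg]
    simpa only [inv_smul_smul₀ hc0.ne'] using smul_nonneg (inv_nonneg.mpr hc0.le) hle
  · rw [spectrum.mem_resolventSet_iff, hscale]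
    exact hunit.smul (Units.mk0 c hc0.ne')

end Order

section Rank

theorem rank_lt_card_of_not_isUnit {K n : Type*} [Field K] [Fintype n] [DecidableEq n]
    {A : Matrix n n K} (hA : ¬IsUnit A) : A.rank < Fintype.card n := by
  refine A.rank_le_card_width.lt_of_ne fun hrank => hA ?_
  rw [← mulVec_surjective_iff_isUnit]
  refine (LinearMap.range_eq_top (f := A.mulVecLin)).mp (Submodule.eq_top_of_finrank_eq ?_)
  rw [Module.finrank_fintype_fun_eq_card]
  exact hrank

theorem exists_eq_mul_conjTranspose_of_posSemidef {𝕜 m : Type*} [RCLike 𝕜] [Fintype m]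
    {S : Matrix m m 𝕜} (hS : S.PosSemidef) :
    ∃ V : Matrix m (Fin S.rank) 𝕜, S = V * Vᴴ := by
  classical
  set ev := hS.isHermitian.eigenvalues
  obtain ⟨e⟩ : Nonempty (Fin S.rank ≃ {i // ev i ≠ 0}) := by
    rw [← Fintype.card_eq, Fintype.card_fin, hS.isHermitian.rank_eq_card_non_zero_eigs]
  obtain ⟨U, spectral⟩ : ∃ U : Matrix m m 𝕜, S = U * diagonal (fun i => (ev i : 𝕜)) * Uᴴ :=
    ⟨hS.isHermitian.eigenvectorUnitary, hS.isHermitian.spectral_theorem⟩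
  have hsqrt (i : m) : (√(ev i) * √(ev i) : 𝕜) = ev i := by
    rw [← RCLike.ofReal_mul, Real.mul_self_sqrt (hS.eigenvalues_nonneg i)]
  refine ⟨of fun i k => U i (e k) * (√(ev (e k)) : 𝕜), ?_⟩
  ext i j
  conv_lhs => rw [spectral]
  rw [mul_apply, mul_apply]
  simp only [mul_diagonal, conjTranspose_apply, of_apply]
  refine (Fintype.sum_of_injective (fun k => (e k : m))
    (Subtype.val_injective.comp e.injective) _ _ (fun x hx => ?_) fun k => ?_).symm
  · have hzero : ev x = 0 := by
      by_contra hne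
      exact hx ⟨e.symm ⟨x, hne⟩, congrArg Subtype.val (e.apply_symm_apply _)⟩
    rw [hzero, RCLike.ofReal_zero, mul_zero, zero_mul]
  · rw [← hsqrt, star_mul', RCLike.star_def, RCLike.conj_ofReal]
    ring

end Rank

section RankReduction

variable {𝕜 m : Type*} [RCLike 𝕜] [Fintype m]

/-- The congruence `X ↦ V X Vᴴ`, bundled as a positive linear map. It is linear over `ℝ` only, to
match the real functionals it is composed with. -/
def congruence {n : Type*} [Fintype n] (V : Matrix m n 𝕜) :
    Matrix n n 𝕜 →ₚ[ℝ] Matrix m m 𝕜 :=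
  .mk₀
    { toFun X := V * X * Vᴴ
      map_add' X Y := by rw [Matrix.mul_add, Matrix.add_mul]
      map_smul' c X := by rw [Matrix.mul_smul, Matrix.smul_mul, RingHom.id_apply] }
    fun _ hX => (hX.posSemidef.mul_mul_conjTranspose_same V).nonneg

theorem congruence_one {n : Type*} [Fintype n] [DecidableEq n] (V : Matrix m n 𝕜) :
    congruence V 1 = V * Vᴴ :=
  congrArg (· * Vᴴ) V.mul_one

theorem rank_congruence_le {n : Type*} [Fintype n] (V : Matrix m n 𝕜) (X : Matrix n n 𝕜) :
    (congruence V X).rank ≤ X.rank :=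
  (rank_mul_le_left _ _).trans (rank_mul_le_right _ _)

variable {E : Type*} [AddCommGroup E] [Module ℝ E] [FiniteDimensional ℝ E]

theorem exists_nonneg_map_eq_rank_lt (L : Matrix m m 𝕜 →ₗ[ℝ] E) (f : Matrix m m 𝕜 →ₚ[ℝ] ℝ)
    {S : Matrix m m 𝕜} (hS : 0 ≤ S)
    (hrank : Module.finrank ℝ E <
      Module.finrank ℝ (selfAdjoint (Matrix (Fin S.rank) (Fin S.rank) 𝕜))) :
    ∃ T : Matrix m m 𝕜, 0 ≤ T ∧ L T = L S ∧ f T ≤ f S ∧ T.rank < S.rank := by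
  obtain ⟨V, hV⟩ := exists_eq_mul_conjTranspose_of_posSemidef hS.posSemidef
  obtain ⟨X, hX, hX0, hLX⟩ :=
    exists_isSelfAdjoint_ne_zero_map_eq_zero (L ∘ₗ (congruence V).toLinearMap) hrank
  wlog hsign : ¬X ≤ 0 ∧ 0 ≤ f (congruence V X) generalizing X
  · exact this (-X) hX.neg (neg_ne_zero.mpr hX0) (by rw [map_neg, hLX, neg_zero])
      ((not_nonpos_and_map_nonneg_or_neg (f.comp (congruence V)) hX0).resolve_left hsign)
  change L (congruence V X) = 0 at hLX
  obtain ⟨t, ht, hle, hsingular⟩ := exists_pos_smul_le_one_not_isUnit hX hsign.1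
  have hT : congruence V (1 - t • X) = S - t • congruence V X := by
    rw [map_sub, map_smul, congruence_one, ← hV]
  refine ⟨congruence V (1 - t • X), (congruence V).map_nonneg (sub_nonneg.mpr hle), ?_, ?_, ?_⟩
  · rw [hT, map_sub, map_smul, hLX, smul_zero, sub_zero]
  · rw [hT, map_sub, map_smul, sub_le_self_iff]
    exact mul_nonneg ht.le hsign.2
  · simpa only [Fintype.card_fin] using
      (rank_congruence_le V _).trans_lt (rank_lt_card_of_not_isUnit hsingular)

theorem exists_nonneg_map_eq_finrank_selfAdjoint_le (L : Matrix m m 𝕜 →ₗ[ℝ] E)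
    (f : Matrix m m 𝕜 →ₚ[ℝ] ℝ) {S : Matrix m m 𝕜} (hS : 0 ≤ S) :
    ∃ T : Matrix m m 𝕜, 0 ≤ T ∧ L T = L S ∧ f T ≤ f S ∧
      Module.finrank ℝ (selfAdjoint (Matrix (Fin T.rank) (Fin T.rank) 𝕜)) ≤
        Module.finrank ℝ E := by
  induction hr : S.rank using Nat.strong_induction_on generalizing S with
  | h r ih =>
    rcases le_or_gt (Module.finrank ℝ (selfAdjoint (Matrix (Fin S.rank) (Fin S.rank) 𝕜)))
      (Module.finrank ℝ E) with hsmall | hlarge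
    · exact ⟨S, hS, rfl, le_rfl, hsmall⟩
    · obtain ⟨T, hT, hLT, hfT, hlt⟩ := exists_nonneg_map_eq_rank_lt L f hS hlarge
      obtain ⟨T', hT', hLT', hfT', hsmall⟩ := ih T.rank (hr ▸ hlt) hT rfl
      exact ⟨T', hT', hLT'.trans hLT, hfT'.trans hfT, hsmall⟩

end RankReduction

section Radar

variable {m ι : Type*} [Fintype m]

/-- The power `Tr S` transmitted with covariance `S = V Vᴴ`, as a positive linear functional. The
real part is taken because the functional is defined on all complex matrices. -/
def transmitPower (m : Type*) [Fintype m] : Matrix m m ℂ →ₚ[ℝ] ℝ :=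
  .mk₀ (Complex.reLm ∘ₗ traceLinearMap m ℝ ℂ) fun _ hS =>
    (Complex.nonneg_iff.mp hS.posSemidef.trace_nonneg).1

/-- The quantities `Tr (Qᵢ S)` on which a quadratic sensing metric depends, as a real-linear map of
the transmit covariance `S = V Vᴴ`. Only real parts are recorded: for Hermitian `Qᵢ` and `S` they
determine the traces, and complex values would double the dimension of the target. -/
def sensingTraces (Q : ι → Matrix m m ℂ) : Matrix m m ℂ →ₗ[ℝ] (ι → ℝ) :=
  LinearMap.pi fun i => Complex.reLm ∘ₗ traceLinearMap m ℝ ℂ ∘ₗ LinearMap.mulLeft ℝ (Q i)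

theorem isSelfAdjoint_trace_mul {R : Type*} [CommSemiring R] [StarRing R] {A B : Matrix m m R}
    (hA : A.IsHermitian) (hB : B.IsHermitian) : IsSelfAdjoint (A * B).trace := by
  rw [isSelfAdjoint_iff, ← trace_conjTranspose, conjTranspose_mul, hA.eq, hB.eq, trace_mul_comm]

theorem ofReal_sensingTraces {Q : ι → Matrix m m ℂ} {i : ι} (hQ : (Q i).IsHermitian)
    {S : Matrix m m ℂ} (hS : S.IsHermitian) : (sensingTraces Q S i : ℂ) = (Q i * S).trace :=
  Complex.conj_eq_iff_re.mp (isSelfAdjoint_trace_mul hQ hS)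

theorem radar_bound_d_quadratic_general {n : Type*} [Fintype n] [Fintype ι]
    (Q : ι → Matrix m m ℂ) (hQ : ∀ i, (Q i).IsHermitian) (V : Matrix m n ℂ) :
    ∃ N ≤ Nat.sqrt (Fintype.card ι), ∃ V' : Matrix m (Fin N) ℂ,
      (∀ i, (Q i * (V' * V'ᴴ)).trace = (Q i * (V * Vᴴ)).trace) ∧
        (V' * V'ᴴ).trace.re ≤ (V * Vᴴ).trace.re := by
  have hV : (V * Vᴴ).PosSemidef := posSemidef_self_mul_conjTranspose V
  obtain ⟨T, hT, htraces, hpower, hrank⟩ :=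
    exists_nonneg_map_eq_finrank_selfAdjoint_le (sensingTraces Q) (transmitPower m) hV.nonneg
  obtain ⟨V', hV'⟩ := exists_eq_mul_conjTranspose_of_posSemidef hT.posSemidef
  refine ⟨T.rank, ?_, V', fun i => ?_, ?_⟩
  · simpa only [finrank_real_selfAdjoint, Module.finrank_matrix, Fintype.card_fin,
      Module.finrank_self, mul_one, Module.finrank_fintype_fun_eq_card, ← Nat.le_sqrt] using hrank
  · rw [← hV', ← ofReal_sensingTraces (hQ i) hT.posSemidef.isHermitian, htraces,
      ofReal_sensingTraces (hQ i) hV.isHermitian]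
  · rw [← hV']
    exact hpower

end Radar

/-- MIMO radar (no communication users), `d`-quadratic sensing metric:
at most `⌊√d⌋` beamformers achieve the same performance as a full set of `N_T`
beamformers, within the same power budget. -/
theorem radar_bound_d_quadratic
    (NT d : ℕ) (hNT : 1 ≤ NT) (hd : 1 ≤ d)
    (P : ℝ) (hP : 0 < P)
    (Q : Fin d → Matrix (Fin NT) (Fin NT) ℂ)
    (hQherm : ∀ i, (Q i).IsHermitian) (hQli : LinearIndependent ℝ Q)
    (Vhat : Matrix (Fin NT) (Fin NT) ℂ)
    (hpow : (Matrix.trace (Vhat * Vhatᴴ)).re ≤ P) :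
    ∃ N : ℕ, N ≤ Nat.sqrt d ∧
      ∃ V' : Matrix (Fin NT) (Fin N) ℂ,
        (∀ i : Fin d,
          Matrix.trace (Q i * (V' * V'ᴴ)) = Matrix.trace (Q i * (Vhat * Vhatᴴ))) ∧
        (Matrix.trace (V' * V'ᴴ)).re ≤ P := by
  obtain ⟨N, hN, V', htraces, hpower⟩ := radar_bound_d_quadratic_general Q hQherm Vhat
  exact ⟨N, by rwa [Fintype.card_fin] at hN, V', htraces, hpower.trans hpow⟩

end
end

section
/- Let K ≥ 1, let h_1,…,h_K ∈ ℂ^{N_T}, let γ_1,…,γ_K > 0 and σ² > 0. Suppose R, R_1,…,R_K ∈ ℂ^{N_T×N_T} are positive semidefinite matrices such that R − Σ_{k=1}^K R_k is positive semidefinite and, for every k, (1 + 1/γ_k) h_k^H R_k h_k − h_k^H R h_k ≥ σ². Then there exist positive semidefinite matrices R̃_1,…,R̃_K, each of rank at most one, such that R − Σ_{k=1}^K R̃_k is positive semidefinite, h_k^H R̃_k h_k = h_k^H R_k h_k for every k, R_k − R̃_k is positive semidefinite for every k, and (1 + 1/γ_k) h_k^H R̃_k h_k − h_k^H R h_k ≥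 σ² for every k. (This is the tightness of the semidefinite relaxation of the no-interference-cancellation ISAC beamforming problem.) -/
/-!
The constraints depend on `R_k` only through the received power `h_kᴴ R_k h_k` and through
`Σ_k R_k ⪯ R`, so it suffices to replace each `R_k` by a matrix of rank at most one below it in
the Loewner order, with the same received power. For `A ⪰ 0`, let `P` be the projection onto the
line of `v` that is orthogonal for the semi-inner product `(x, y) ↦ xᴴ A y`. Then `A P` has rank
at most one and `vᴴ A P v = vᴴ A v`, while `A P = Pᴴ A P ⪰ 0` and
`A - A P = (1 - P)ᴴ A (1 - P) ⪰ 0`.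
-/

open Matrix Finset
open scoped ComplexOrder

noncomputable section

theorem posSemidef_sub_sum_of_le {n ι 𝕜 : Type*} [Ring 𝕜] [PartialOrder 𝕜] [StarRing 𝕜]
    [AddLeftMono 𝕜] {R : Matrix n n 𝕜} {A B : ι → Matrix n n 𝕜} {s : Finset ι}
    (hR : (R - ∑ i ∈ s, A i).PosSemidef) (hBA : ∀ i ∈ s, (A i - B i).PosSemidef) :
    (R - ∑ i ∈ s, B i).PosSemidef := by
  simpa only [sum_sub_distrib, sub_add_sub_cancel] using hR.add (posSemidef_sum s hBA)

section PosSemidef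

variable {n 𝕜 : Type*} [Fintype n] [Ring 𝕜] [PartialOrder 𝕜] [StarRing 𝕜]

theorem posSemidef_mul_of_isIdempotentElem {A P : Matrix n n 𝕜} (hA : A.PosSemidef)
    (hP : IsIdempotentElem P) (hAP : (A * P).IsHermitian) : (A * P).PosSemidef := by
  have compression : Pᴴ * A * P = A * P :=
    calc Pᴴ * A * P = (A * P)ᴴ * P := by rw [conjTranspose_mul, hA.isHermitian.eq]
      _ = A * P := by rw [hAP.eq, Matrix.mul_assoc, hP.eq]
  exact compression ▸ hA.conjTranspose_mul_mul_same P

theorem posSemidef_sub_mul_of_isIdempotentElem {A P : Matrix n n 𝕜} (hA : A.PosSemidef)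
    (hP : IsIdempotentElem P) (hAP : (A * P).IsHermitian) : (A - A * P).PosSemidef := by
  classical
  have factor : A * (1 - P) = A - A * P := by rw [Matrix.mul_sub, Matrix.mul_one]
  rw [← factor]
  exact posSemidef_mul_of_isIdempotentElem hA hP.one_sub (factor ▸ hA.isHermitian.sub hAP)

end PosSemidef

section FormProjection

variable {n 𝕜 : Type*} [Fintype n] [Field 𝕜] [StarRing 𝕜]

/-- The projection `x ↦ (vᴴ A v)⁻¹ (vᴴ A x) v` onto the line of `v`, orthogonal for the
sesquilinear form `(x, y) ↦ xᴴ A y`. It is `0` when `vᴴ A v = 0`, since then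
`(vᴴ A v)⁻¹ = 0`. -/
def formProjection (A : Matrix n n 𝕜) (v : n → 𝕜) : Matrix n n 𝕜 :=
  vecMulVec v ((star v ⬝ᵥ A *ᵥ v)⁻¹ • (star v ᵥ* A))

theorem isIdempotentElem_formProjection (A : Matrix n n 𝕜) (v : n → 𝕜) :
    IsIdempotentElem (formProjection A v) := by
  have inv_mul_mul_inv (c : 𝕜) : c⁻¹ * c * c⁻¹ = c⁻¹ := by
    simpa only [inv_inv] using mul_inv_mul_cancel c⁻¹
  rw [IsIdempotentElem, formProjection, vecMulVec_mul_vecMulVec, smul_dotProduct,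
    ← dotProduct_mulVec, smul_smul, smul_eq_mul, inv_mul_mul_inv]

theorem isHermitian_mul_formProjection {A : Matrix n n 𝕜} (hA : A.IsHermitian) (v : n → 𝕜) :
    (A * formProjection A v).IsHermitian := by
  have star_vecMul_eq : star v ᵥ* A = star (A *ᵥ v) := by rw [star_mulVec, hA.eq]
  have star_form : star (star v ⬝ᵥ A *ᵥ v) = star v ⬝ᵥ A *ᵥ v := by
    rw [← star_dotProduct_star, star_star, ← star_vecMul_eq, dotProduct_mulVec]
  rw [IsHermitian, formProjection, mul_vecMulVec, star_vecMul_eq, vecMulVec_smul,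
    conjTranspose_smul, conjTranspose_vecMulVec, star_star, star_inv₀, star_form]

theorem rank_mul_formProjection_le (A : Matrix n n 𝕜) (v : n → 𝕜) :
    (A * formProjection A v).rank ≤ 1 :=
  (rank_mul_le_right _ _).trans (rank_vecMulVec_le _ _)

theorem dotProduct_mul_formProjection_mulVec_self (A : Matrix n n 𝕜) (v : n → 𝕜) :
    star v ⬝ᵥ (A * formProjection A v) *ᵥ v = star v ⬝ᵥ A *ᵥ v := by
  rw [formProjection, mul_vecMulVec, vecMulVec_mulVec, op_smul_eq_smul, dotProduct_smul,
    smul_dotProduct, ← dotProduct_mulVec, smul_eq_mul, smul_eq_mul, inv_mul_mul_self]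

end FormProjection

theorem sdr_tight_NIC_general {n ι 𝕜 : Type*} [Fintype n] [Fintype ι] [Field 𝕜] [PartialOrder 𝕜]
    [StarRing 𝕜] [AddLeftMono 𝕜] (h : ι → n → 𝕜) {R : Matrix n n 𝕜} {Rk : ι → Matrix n n 𝕜}
    (hRk : ∀ k, (Rk k).PosSemidef) (hdom : (R - ∑ k, Rk k).PosSemidef) :
    ∃ Rt : ι → Matrix n n 𝕜,
      (∀ k, (Rt k).PosSemidef) ∧
      (∀ k, (Rt k).rank ≤ 1) ∧
      (R - ∑ k, Rt k).PosSemidef ∧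
      (∀ k, star (h k) ⬝ᵥ Rt k *ᵥ h k = star (h k) ⬝ᵥ Rk k *ᵥ h k) ∧
      (∀ k, (Rk k - Rt k).PosSemidef) := by
  have idempotent k := isIdempotentElem_formProjection (Rk k) (h k)
  have hermitian k := isHermitian_mul_formProjection (hRk k).isHermitian (h k)
  have le_Rk k := posSemidef_sub_mul_of_isIdempotentElem (hRk k) (idempotent k) (hermitian k)
  exact ⟨fun k => Rk k * formProjection (Rk k) (h k),
    fun k => posSemidef_mul_of_isIdempotentElem (hRk k) (idempotent k) (hermitian k),
    fun k => rank_mul_formProjection_le (Rk k) (h k),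
    posSemidef_sub_sum_of_le hdom fun k _ => le_Rk k,
    fun k => dotProduct_mul_formProjection_mulVec_self (Rk k) (h k),
    le_Rk⟩

/-- Tightness of the semidefinite relaxation of the no-interference-cancellation ISAC
beamforming problem: any feasible solution can be replaced by one where each user's
covariance has rank at most one, keeping the same overall covariance `R`. -/
theorem sdr_tight_NIC
    (NT K : ℕ) (hK : 1 ≤ K)
    (h : Fin K → (Fin NT → ℂ))
    (γ : Fin K → ℝ) (hγ : ∀ k, 0 < γ k)
    (σ2 : ℝ) (hσ2 : 0 < σ2)
    (R : Matrix (Fin NT) (Fin NT) ℂ) (Rk : Fin K → Matrix (Fin NT) (Fin NT) ℂ)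
    (hR : R.PosSemidef) (hRk : ∀ k, (Rk k).PosSemidef)
    (hdom : (R - ∑ k, Rk k).PosSemidef)
    (hSINR : ∀ k : Fin K,
      σ2 ≤ (1 + 1 / γ k) * (star (h k) ⬝ᵥ (Rk k) *ᵥ h k).re
            - (star (h k) ⬝ᵥ R *ᵥ h k).re) :
    ∃ Rt : Fin K → Matrix (Fin NT) (Fin NT) ℂ,
      (∀ k, (Rt k).PosSemidef) ∧
      (∀ k, (Rt k).rank ≤ 1) ∧
      (R - ∑ k, Rt k).PosSemidef ∧
      (∀ k, star (h k) ⬝ᵥ (Rt k) *ᵥ h k = star (h k) ⬝ᵥ (Rk k) *ᵥ h k) ∧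
      (∀ k, (Rk k - Rt k).PosSemidef) ∧
      (∀ k : Fin K,
        σ2 ≤ (1 + 1 / γ k) * (star (h k) ⬝ᵥ (Rt k) *ᵥ h k).re
              - (star (h k) ⬝ᵥ R *ᵥ h k).re) := by
  obtain ⟨Rt, hRt, hrank, hsum, hpower, hle⟩ := sdr_tight_NIC_general h hRk hdom
  exact ⟨Rt, hRt, hrank, hsum, hpower, hle, fun k => (hpower k).symm ▸ hSINR k⟩

end
end
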